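/- Let G^i be a spray with coefficients N^i_j and let F̃ be a Finsler structure on U with metric tensor g̃_{ij}. Then the following are equivalent: (a) there exists a smooth, positively 1-homogeneous function P : Ω → ℝ such that S(∂F̃²/∂y^i) − ∂F̃²/∂x^i = 2P ∂F̃²/∂y^i on Ω for all i (i.e. the spray S is projectively related to F̃); (b) there exists a smooth, positively 1-homogeneous function P : Ω → ℝ such that the Levi-Civita equations hold on Ω for all i, j: ∇g̃_{ij} = 2P g̃_{ij} + (∂P/∂y^i) Σ_k g̃_{kj} y^k + (∂P/∂y^j) Σ_k g̃_{ik} y^k, where ∇g̃_{ij} = S(g̃_{ij}) − Σ_k (N^k_i g̃_{kj} + N^k_j g̃_{ik}). -/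

import Mathlib

noncomputable section

/-- A point `(x, y)` of the tangent space coordinates over `ℝⁿ`. -/
abbrev Pt (n : ℕ) : Type := (Fin n → ℝ) × (Fin n → ℝ)

/-- `Ω = U × (ℝⁿ \ {0})`. -/
def OmegaSet {n : ℕ} (U : Set (Fin n → ℝ)) : Set (Pt n) :=
  {p : Pt n | p.1 ∈ U ∧ p.2 ≠ 0}

/-- Partial derivative `∂f/∂x^i`. -/
def pdx {n : ℕ} (f : Pt n → ℝ) (i : Fin n) (p : Pt n) : ℝ :=
  fderiv ℝ f p (Pi.single i 1, 0)

/-- Partial derivative `∂f/∂y^i`. -/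
def pdy {n : ℕ} (f : Pt n → ℝ) (i : Fin n) (p : Pt n) : ℝ :=
  fderiv ℝ f p (0, Pi.single i 1)

/-- Second fibre derivative `∂²f/∂y^i∂y^j`. -/
def pdyy {n : ℕ} (f : Pt n → ℝ) (i j : Fin n) : Pt n → ℝ :=
  pdy (pdy f j) i

/-- The spray vector field applied to a function:
`S(f) = Σ_k (y^k ∂f/∂x^k − 2 G^k ∂f/∂y^k)`. -/
def Sop {n : ℕ} (G : Fin n → Pt n → ℝ) (f : Pt n → ℝ) (p : Pt n) : ℝ :=
  ∑ k, (p.2 k * pdx f k p - 2 * G k p * pdy f k p)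

/-- Connection coefficients `N^i_j = ∂G^i/∂y^j`. -/
def Ncoef {n : ℕ} (G : Fin n → Pt n → ℝ) (i j : Fin n) : Pt n → ℝ :=
  pdy (G i) j

/-- Horizontal derivative `δf/δx^i = ∂f/∂x^i − Σ_j N^j_i ∂f/∂y^j`. -/
def deltax {n : ℕ} (G : Fin n → Pt n → ℝ) (f : Pt n → ℝ) (i : Fin n) (p : Pt n) : ℝ :=
  pdx f i p - ∑ j, Ncoef G j i p * pdy f j p

/-- Dynamical covariant derivative of a `(0,2)` family:
`∇T_{ij} = S(T_{ij}) − Σ_k (N^k_i T_{kj} + N^k_j T_{ik})`. -/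
def nablaT {n : ℕ} (G : Fin n → Pt n → ℝ) (T : Fin n → Fin n → Pt n → ℝ)
    (i j : Fin n) (p : Pt n) : ℝ :=
  Sop G (T i j) p - ∑ k, (Ncoef G k i p * T k j p + Ncoef G k j p * T i k p)

/-- `f` is positively `k`-homogeneous in the fibre variable `y`, on `Ω`. -/
def PosHomog {n : ℕ} (U : Set (Fin n → ℝ)) (k : ℤ) (f : Pt n → ℝ) : Prop :=
  ∀ L : ℝ, 0 < L → ∀ p ∈ OmegaSet U, f (p.1, L • p.2) = L ^ k * f p

/-- A spray: smooth, positively 2-homogeneous coefficients `G^i`. -/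
def IsSpray {n : ℕ} (U : Set (Fin n → ℝ)) (G : Fin n → Pt n → ℝ) : Prop :=
  ∀ i, ContDiffOn ℝ (⊤ : ℕ∞) (G i) (OmegaSet U) ∧ PosHomog U 2 (G i)

/-- Components of the Euler-Lagrange 1-form: `(δ_S f)_i = S(∂f/∂y^i) − ∂f/∂x^i`. -/
def EL {n : ℕ} (G : Fin n → Pt n → ℝ) (f : Pt n → ℝ) (i : Fin n) (p : Pt n) : ℝ :=
  Sop G (pdy f i) p - pdx f i p

/-- The metric tensor `g_{ij} = ½ ∂²(F²)/∂y^i∂y^j` of a Finsler function. -/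
def metricTensor {n : ℕ} (F : Pt n → ℝ) (i j : Fin n) (p : Pt n) : ℝ :=
  (1 / 2) * pdyy (fun q => F q ^ 2) i j p

/-- A Finsler structure on `U`: smooth, positive, positively 1-homogeneous,
with invertible metric tensor at every point of `Ω`. -/
def IsFinsler {n : ℕ} (U : Set (Fin n → ℝ)) (F : Pt n → ℝ) : Prop :=
  ContDiffOn ℝ (⊤ : ℕ∞) F (OmegaSet U) ∧ (∀ p ∈ OmegaSet U, 0 < F p) ∧ PosHomog U 1 F ∧
    ∀ p ∈ OmegaSet U, IsUnit (Matrix.of (fun i j => metricTensor F i j p))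

/-!
For a spray `S` and a Lagrangian `L` with `g = ½ ∂²L/∂y∂y`, the dynamical covariant derivative of
`g` is a quarter of the symmetrised fibre derivative of the Euler–Lagrange form:
`4 ∇g_{ij} = ∂(δ_S L)_i/∂y^j + ∂(δ_S L)_j/∂y^i`.
If `L` is 2-homogeneous, Euler's theorem gives `2 Σ_k g_{ik} y^k = ∂L/∂y^i`, and the Levi-Civita
equations for `P` become `∂D_i/∂y^j + ∂D_j/∂y^i = 0` for the form `D = δ_S L − 2P d_J L`.
Since `D` is 2-homogeneous, contracting this twice with `y` yields first
`∂φ/∂y^i = −D_i` for `φ = Σ_i y^i D_i`, then `φ = 0`, so that `D = 0`.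
-/

open Filter Topology

section SecondDerivative

variable {E F : Type*} [NormedAddCommGroup E] [NormedSpace ℝ E]
  [NormedAddCommGroup F] [NormedSpace ℝ F] {f : E → F} {p : E}

theorem differentiableAt_fderiv (hf : ContDiffAt ℝ 2 f p) : DifferentiableAt ℝ (fderiv ℝ f) p :=
  (hf.fderiv_right (m := 1) (by norm_num)).differentiableAt one_ne_zero

theorem fderiv_fderiv_apply (hf : DifferentiableAt ℝ (fderiv ℝ f) p) (v w : E) :
    fderiv ℝ (fun q => fderiv ℝ f q v) p w = fderiv ℝ (fderiv ℝ f) p w v := by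
  simp [fderiv_clm_apply hf (differentiableAt_const v)]

theorem fderiv_fderiv_apply_comm (hf : ContDiffAt ℝ 2 f p) (v w : E) :
    fderiv ℝ (fun q => fderiv ℝ f q v) p w = fderiv ℝ (fun q => fderiv ℝ f q w) p v := by
  have hdf : DifferentiableAt ℝ (fderiv ℝ f) p := differentiableAt_fderiv hf
  rw [fderiv_fderiv_apply hdf, fderiv_fderiv_apply hdf]
  exact hf.isSymmSndFDerivAt (by simp) w v

end SecondDerivative

section ProjectiveRelation

variable {n : ℕ} {U : Set (Fin n → ℝ)} {G : Fin n → Pt n → ℝ} {f g : Pt n → ℝ} {p : Pt n}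

theorem isOpen_omegaSet (hU : IsOpen U) : IsOpen (OmegaSet U) :=
  (hU.preimage continuous_fst).inter (isOpen_ne_fun continuous_snd continuous_const)

theorem smul_snd_mem_omegaSet (hp : p ∈ OmegaSet U) {c : ℝ} (hc : c ≠ 0) :
    (p.1, c • p.2) ∈ OmegaSet U :=
  ⟨hp.1, smul_ne_zero hc hp.2⟩

/-! ### Coordinate derivatives -/

theorem fderiv_eq_sum_pdx_add_sum_pdy (f : Pt n → ℝ) (p v : Pt n) :
    fderiv ℝ f p v = ∑ k, v.1 k * pdx f k p + ∑ k, v.2 k * pdy f k p := by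
  have hv : v = ∑ k, v.1 k • ((Pi.single k 1, 0) : Pt n)
      + ∑ k, v.2 k • ((0, Pi.single k 1) : Pt n) := by
    ext l <;> simp [Prod.fst_sum, Prod.snd_sum, Pi.single_apply]
  conv_lhs => rw [hv]
  simp only [map_add, map_sum, map_smul, smul_eq_mul, pdx, pdy]

theorem pdy_congr (h : f =ᶠ[𝓝 p] g) (i : Fin n) : pdy f i p = pdy g i p := by
  rw [pdy, pdy, h.fderiv_eq]

theorem pdy_snd_apply (k i : Fin n) (p : Pt n) :
    pdy (fun q => q.2 k) i p = if k = i then 1 else 0 := by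
  let coord : Pt n →L[ℝ] ℝ :=
    (ContinuousLinearMap.proj k : (Fin n → ℝ) →L[ℝ] ℝ).comp (ContinuousLinearMap.snd ℝ _ _)
  have hcoord : fderiv ℝ (fun q : Pt n => q.2 k) p = coord := coord.fderiv
  simp [pdy, hcoord, coord, Pi.single_apply]

theorem pdy_const (c : ℝ) (i : Fin n) (p : Pt n) : pdy (fun _ => c) i p = 0 := by
  simp [pdy]

theorem pdy_mul (hf : DifferentiableAt ℝ f p) (hg : DifferentiableAt ℝ g p) (i : Fin n) :
    pdy (fun q => f q * g q) i p = pdy f i p * g p + f p * pdy g i p := by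
  simp only [pdy, fderiv_fun_mul hf hg, add_apply, smul_apply, smul_eq_mul]
  ring

theorem pdy_sub (hf : DifferentiableAt ℝ f p) (hg : DifferentiableAt ℝ g p) (i : Fin n) :
    pdy (fun q => f q - g q) i p = pdy f i p - pdy g i p := by
  simp [pdy, fderiv_fun_sub hf hg]

theorem pdy_const_mul (hf : DifferentiableAt ℝ f p) (c : ℝ) (i : Fin n) :
    pdy (fun q => c * f q) i p = c * pdy f i p := by
  simp [pdy, fderiv_const_mul hf]

theorem pdy_sum {ι : Type*} {s : Finset ι} {F : ι → Pt n → ℝ}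
    (hF : ∀ k ∈ s, DifferentiableAt ℝ (F k) p) (i : Fin n) :
    pdy (fun q => ∑ k ∈ s, F k q) i p = ∑ k ∈ s, pdy (F k) i p := by
  simp [pdy, fderiv_fun_sum hF]

theorem contDiffAt_pdy {m k : WithTop ℕ∞} (hf : ContDiffAt ℝ k f p) (hmk : m + 1 ≤ k)
    (i : Fin n) : ContDiffAt ℝ m (pdy f i) p :=
  (hf.fderiv_right hmk).clm_apply contDiffAt_const

theorem differentiableAt_pdx (hf : ContDiffAt ℝ 2 f p) (i : Fin n) :
    DifferentiableAt ℝ (pdx f i) p :=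
  (differentiableAt_fderiv hf).clm_apply (differentiableAt_const _)

theorem differentiableAt_pdy (hf : ContDiffAt ℝ 2 f p) (i : Fin n) :
    DifferentiableAt ℝ (pdy f i) p :=
  (differentiableAt_fderiv hf).clm_apply (differentiableAt_const _)

theorem pdy_pdx_comm (hf : ContDiffAt ℝ 2 f p) (i j : Fin n) :
    pdy (pdx f i) j p = pdx (pdy f j) i p :=
  fderiv_fderiv_apply_comm hf _ _

theorem pdy_pdy_comm (hf : ContDiffAt ℝ 2 f p) (i j : Fin n) :
    pdy (pdy f i) j p = pdy (pdy f j) i p :=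
  fderiv_fderiv_apply_comm hf _ _

/-! ### Positive homogeneity -/

theorem posHomog_snd_apply (k : Fin n) : PosHomog U 1 fun q => q.2 k :=
  fun c _ p _ => by simp

namespace PosHomog

variable {k l : ℤ}

theorem mul (hf : PosHomog U k f) (hg : PosHomog U l g) :
    PosHomog U (k + l) fun q => f q * g q := fun c hc p hp => by
  simp only [hf c hc p hp, hg c hc p hp, zpow_add₀ hc.ne']
  ring

theorem pow (hf : PosHomog U k f) (m : ℕ) : PosHomog U (m * k) fun q => f q ^ m :=
  fun c hc p hp => by
    simp only [hf c hc p hp, mul_pow, zpow_mul', zpow_natCast]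

theorem const_mul (hf : PosHomog U k f) (a : ℝ) : PosHomog U k fun q => a * f q :=
  fun c hc p hp => by
    simp only [hf c hc p hp]
    ring

theorem sub (hf : PosHomog U k f) (hg : PosHomog U k g) :
    PosHomog U k fun q => f q - g q := fun c hc p hp => by
  simp only [hf c hc p hp, hg c hc p hp]
  ring

theorem sum {ι : Type*} {s : Finset ι} {F : ι → Pt n → ℝ} (hF : ∀ i ∈ s, PosHomog U k (F i)) :
    PosHomog U k fun q => ∑ i ∈ s, F i q := fun c hc p hp => by
  rw [Finset.mul_sum]
  exact Finset.sum_congr rfl fun i hi => hF i hi c hc p hp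

theorem fderiv_smul_snd (hf : PosHomog U k f) (hU : IsOpen U)
    (hdf : DifferentiableOn ℝ f (OmegaSet U)) {c : ℝ} (hc : 0 < c) (hp : p ∈ OmegaSet U)
    (v : Pt n) : fderiv ℝ f (p.1, c • p.2) (v.1, c • v.2) = c ^ k * fderiv ℝ f p v := by
  have hΩ := isOpen_omegaSet hU
  let scale : Pt n →L[ℝ] Pt n := (ContinuousLinearMap.fst ℝ _ _).prod
    (c • ContinuousLinearMap.snd ℝ (Fin n → ℝ) (Fin n → ℝ))
  have hscale : HasFDerivAt (fun q => f (scale q)) (fderiv ℝ f (scale p) ∘L scale) p :=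
    (hdf.differentiableAt (hΩ.mem_nhds (smul_snd_mem_omegaSet hp hc.ne'))).hasFDerivAt.comp p
      scale.hasFDerivAt
  have heq : (fun q => f (scale q)) =ᶠ[𝓝 p] fun q => c ^ k * f q :=
    eventually_of_mem (hΩ.mem_nhds hp) (hf c hc)
  have hderiv := heq.fderiv_eq (𝕜 := ℝ)
  rw [hscale.fderiv, fderiv_const_mul (hdf.differentiableAt (hΩ.mem_nhds hp))] at hderiv
  exact DFunLike.congr_fun hderiv v

end PosHomog

theorem posHomog_pdx {k : ℤ} (hf : PosHomog U k f) (hU : IsOpen U)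
    (hdf : DifferentiableOn ℝ f (OmegaSet U)) (i : Fin n) :
    PosHomog U k (pdx f i) := fun c hc p hp => by
  simpa [pdx] using hf.fderiv_smul_snd hU hdf hc hp (Pi.single i 1, 0)

theorem posHomog_pdy {k : ℤ} (hf : PosHomog U k f) (hU : IsOpen U)
    (hdf : DifferentiableOn ℝ f (OmegaSet U)) (i : Fin n) :
    PosHomog U (k - 1) (pdy f i) := fun c hc p hp => by
  have hscale := hf.fderiv_smul_snd hU hdf hc hp (0, Pi.single i 1)
  have hsmul : ((0, c • Pi.single i 1) : Pt n) = c • (0, Pi.single i 1) := by simp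
  rw [hsmul, map_smul, smul_eq_mul] at hscale
  rw [pdy, pdy, zpow_sub_one₀ hc.ne', mul_right_comm, ← hscale]
  field_simp

theorem PosHomog.sum_snd_mul_pdy {k : ℤ} (hf : PosHomog U k f) (hdf : DifferentiableAt ℝ f p)
    (hp : p ∈ OmegaSet U) : ∑ i, p.2 i * pdy f i p = k * f p := by
  have hray : HasDerivAt (fun c : ℝ => ((p.1, c • p.2) : Pt n)) (0, p.2) 1 := by
    simpa using (hasDerivAt_const (1 : ℝ) p.1).prodMk
      ((hasDerivAt_id (1 : ℝ)).smul_const p.2)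
  have hbase : HasFDerivAt f (fderiv ℝ f p) (p.1, (1 : ℝ) • p.2) := by
    simpa using hdf.hasFDerivAt
  have hchain : HasDerivAt (fun c : ℝ => f (p.1, c • p.2)) (fderiv ℝ f p (0, p.2)) 1 :=
    hbase.comp_hasDerivAt (1 : ℝ) hray
  have hpow : HasDerivAt (fun c : ℝ => c ^ k * f p) (k * f p) 1 := by
    simpa using (hasDerivAt_zpow k (1 : ℝ) (Or.inl one_ne_zero)).mul_const (f p)
  have heq : (fun c : ℝ => f (p.1, c • p.2)) =ᶠ[𝓝 1] fun c => c ^ k * f p := by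
    filter_upwards [Ioi_mem_nhds (zero_lt_one' ℝ)] with c hc using hf c hc p hp
  rw [← hchain.unique (hpow.congr_of_eventuallyEq heq), fderiv_eq_sum_pdx_add_sum_pdy]
  simp

/-! ### Homogeneous forms with skew-symmetric fibre derivative -/

theorem pdy_sum_snd_mul {D : Fin n → Pt n → ℝ} (hD : ∀ i, DifferentiableAt ℝ (D i) p)
    (i : Fin n) :
    pdy (fun q => ∑ j, q.2 j * D j q) i p = D i p + ∑ j, p.2 j * pdy (D j) i p := by
  have hsnd : ∀ j, DifferentiableAt ℝ (fun q : Pt n => q.2 j) p := fun j => by fun_prop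
  rw [pdy_sum fun j _ => (hsnd j).fun_mul (hD j)]
  simp [pdy_mul (hsnd _) (hD _), pdy_snd_apply, Finset.sum_add_distrib]

theorem pdy_sum_snd_mul_of_skew {k : ℤ} {D : Fin n → Pt n → ℝ}
    (hdD : ∀ i, DifferentiableAt ℝ (D i) p) (i : Fin n) (hD : PosHomog U k (D i))
    (hp : p ∈ OmegaSet U) (hskew : ∀ j, pdy (D i) j p + pdy (D j) i p = 0) :
    pdy (fun q => ∑ j, q.2 j * D j q) i p = (1 - k) * D i p := by
  have hcontract : ∑ j, p.2 j * pdy (D j) i p = -∑ j, p.2 j * pdy (D i) j p := by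
    rw [← Finset.sum_neg_distrib]
    exact Finset.sum_congr rfl fun j _ => by linear_combination p.2 j * hskew j
  rw [pdy_sum_snd_mul hdD, hcontract, hD.sum_snd_mul_pdy (hdD i) hp]
  ring

theorem eq_zero_of_pdy_add_pdy_swap_eq_zero (hU : IsOpen U) {k : ℤ} (hk0 : k ≠ 0) (hk1 : k ≠ 1)
    {D : Fin n → Pt n → ℝ} (hdD : ∀ i, DifferentiableOn ℝ (D i) (OmegaSet U))
    (hD : ∀ i, PosHomog U k (D i))
    (hskew : ∀ i j, ∀ p ∈ OmegaSet U, pdy (D i) j p + pdy (D j) i p = 0)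
    (i : Fin n) (hp : p ∈ OmegaSet U) : D i p = 0 := by
  have hdiff : ∀ q ∈ OmegaSet U, ∀ j, DifferentiableAt ℝ (D j) q := fun q hq j =>
    (hdD j).differentiableAt ((isOpen_omegaSet hU).mem_nhds hq)
  let φ : Pt n → ℝ := fun q => ∑ j, q.2 j * D j q
  have hpdyφ : ∀ q ∈ OmegaSet U, ∀ i, pdy φ i q = (1 - k) * D i q := fun q hq i =>
    pdy_sum_snd_mul_of_skew (hdiff q hq) i (hD i) hq fun j => hskew i j q hq
  have hφ : ∀ q ∈ OmegaSet U, φ q = 0 := fun q hq => by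
    have hdφ : DifferentiableAt ℝ φ q :=
      .fun_sum fun j _ => .fun_mul (by fun_prop) (hdiff q hq j)
    have hφ_homog : PosHomog U (1 + k) φ := .sum fun j _ => (posHomog_snd_apply j).mul (hD j)
    have heuler : (1 - k) * φ q = (1 + k) * φ q := calc
      (1 - k) * φ q = ∑ i, q.2 i * pdy φ i q := by
        simp only [φ, hpdyφ q hq, Finset.mul_sum, mul_left_comm]
      _ = (1 + k) * φ q := by
        rw [hφ_homog.sum_snd_mul_pdy hdφ hq]
        push_cast
        rfl
    have hkφ : (k : ℝ) * φ q = 0 := by linarith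
    exact (mul_eq_zero.mp hkφ).resolve_left (mod_cast hk0)
  have hzero : pdy φ i p = 0 := by
    have hφ_near : φ =ᶠ[𝓝 p] fun _ => 0 :=
      eventually_of_mem ((isOpen_omegaSet hU).mem_nhds hp) hφ
    rw [pdy_congr hφ_near, pdy_const]
  rw [hpdyφ p hp i] at hzero
  exact (mul_eq_zero.mp hzero).resolve_left (sub_ne_zero.mpr (mod_cast hk1.symm))

/-! ### The spray and its Euler–Lagrange form -/

/-- The spray `S = y^k ∂/∂x^k − 2 G^k ∂/∂y^k` as a vector-valued function, so that `Sop G f` is the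
derivative of `f` along it. -/
def sprayField (G : Fin n → Pt n → ℝ) (p : Pt n) : Pt n :=
  (p.2, fun k => -2 * G k p)

theorem sop_eq_fderiv (G : Fin n → Pt n → ℝ) (f : Pt n → ℝ) (p : Pt n) :
    Sop G f p = fderiv ℝ f p (sprayField G p) := by
  rw [fderiv_eq_sum_pdx_add_sum_pdy, Sop, ← Finset.sum_add_distrib]
  exact Finset.sum_congr rfl fun k _ => by
    simp only [sprayField]
    ring

theorem differentiableAt_sprayField (hG : ∀ k, DifferentiableAt ℝ (G k) p) :
    DifferentiableAt ℝ (sprayField G) p :=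
  differentiableAt_snd.prodMk (differentiableAt_pi.mpr fun k => (hG k).const_mul (-2))

theorem fderiv_sprayField_vertical (hG : ∀ k, DifferentiableAt ℝ (G k) p) (j : Fin n) :
    fderiv ℝ (sprayField G) p (0, Pi.single j 1)
      = (Pi.single j 1, fun k => -2 * Ncoef G k j p) := by
  have hvert : ∀ k, DifferentiableAt ℝ (fun q => -2 * G k q) p := fun k => (hG k).const_mul _
  have hspray : HasFDerivAt (sprayField G) ((ContinuousLinearMap.snd ℝ _ _).prod
      (.pi fun k => fderiv ℝ (fun q => -2 * G k q) p)) p :=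
    hasFDerivAt_snd.prodMk (hasFDerivAt_pi.mpr fun k => (hvert k).hasFDerivAt)
  rw [hspray.fderiv]
  ext k
  · simp
  · exact pdy_const_mul (hG k) (-2) j

theorem sop_congr (G : Fin n → Pt n → ℝ) (h : f =ᶠ[𝓝 p] g) : Sop G f p = Sop G g p := by
  rw [sop_eq_fderiv, sop_eq_fderiv, h.fderiv_eq]

theorem sop_const_mul (G : Fin n → Pt n → ℝ) (hf : DifferentiableAt ℝ f p) (c : ℝ) :
    Sop G (fun q => c * f q) p = c * Sop G f p := by
  simp [sop_eq_fderiv, fderiv_const_mul hf]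

theorem differentiableAt_sop (hG : ∀ k, DifferentiableAt ℝ (G k) p) (hf : ContDiffAt ℝ 2 f p) :
    DifferentiableAt ℝ (Sop G f) p := by
  rw [funext (sop_eq_fderiv G f)]
  exact (differentiableAt_fderiv hf).clm_apply (differentiableAt_sprayField hG)

theorem pdy_sop (hG : ∀ k, DifferentiableAt ℝ (G k) p) (hf : ContDiffAt ℝ 2 f p) (j : Fin n) :
    pdy (Sop G f) j p
      = Sop G (pdy f j) p + pdx f j p - 2 * ∑ k, Ncoef G k j p * pdy f k p := by
  have hdf : DifferentiableAt ℝ (fderiv ℝ f) p := differentiableAt_fderiv hf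
  have hsecond : fderiv ℝ (fderiv ℝ f) p (0, Pi.single j 1) (sprayField G p)
      = Sop G (pdy f j) p := by
    rw [sop_eq_fderiv, ← fderiv_fderiv_apply hdf, fderiv_fderiv_apply_comm hf]
    rfl
  have hfirst : fderiv ℝ f p (fderiv ℝ (sprayField G) p (0, Pi.single j 1))
      = pdx f j p - 2 * ∑ k, Ncoef G k j p * pdy f k p := by
    rw [fderiv_sprayField_vertical hG, fderiv_eq_sum_pdx_add_sum_pdy]
    simp [Pi.single_apply, Finset.mul_sum, mul_assoc, sub_eq_add_neg]
  rw [funext (sop_eq_fderiv G f), pdy, fderiv_clm_apply hdf (differentiableAt_sprayField hG)]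
  simp only [add_apply, ContinuousLinearMap.comp_apply, ContinuousLinearMap.flip_apply]
  rw [hfirst, hsecond]
  ring

theorem posHomog_sop {k : ℤ} (hG : ∀ i, PosHomog U 2 (G i)) (hU : IsOpen U)
    (hf : PosHomog U k f) (hdf : DifferentiableOn ℝ f (OmegaSet U)) :
    PosHomog U (k + 1) (Sop G f) := by
  refine .sum fun i _ => .sub ?_ ?_
  · simpa only [add_comm] using (posHomog_snd_apply i).mul (posHomog_pdx hf hU hdf i)
  · convert ((hG i).const_mul 2).mul (posHomog_pdy hf hU hdf i) using 1
    ring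

theorem posHomog_el {k : ℤ} (hG : ∀ i, PosHomog U 2 (G i)) (hU : IsOpen U)
    (hf : PosHomog U k f) (hcf : ContDiffOn ℝ 2 f (OmegaSet U)) (i : Fin n) :
    PosHomog U k (EL G f i) := by
  have hdf : DifferentiableOn ℝ f (OmegaSet U) := hcf.differentiableOn two_ne_zero
  have hdpdy : DifferentiableOn ℝ (pdy f i) (OmegaSet U) := fun q hq =>
    (differentiableAt_pdy (hcf.contDiffAt ((isOpen_omegaSet hU).mem_nhds hq))
      i).differentiableWithinAt
  have hsop := posHomog_sop hG hU (posHomog_pdy hf hU hdf i) hdpdy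
  rw [sub_add_cancel] at hsop
  exact hsop.sub (posHomog_pdx hf hU hdf i)

theorem differentiableAt_el (hG : ∀ k, DifferentiableAt ℝ (G k) p) (hf : ContDiffAt ℝ 3 f p)
    (i : Fin n) : DifferentiableAt ℝ (EL G f i) p :=
  (differentiableAt_sop hG (contDiffAt_pdy hf (by norm_num) i)).fun_sub
    (differentiableAt_pdx (hf.of_le (by norm_num)) i)

theorem pdy_el (hG : ∀ k, DifferentiableAt ℝ (G k) p) (hf : ContDiffAt ℝ 3 f p) (i j : Fin n) :
    pdy (EL G f i) j p = Sop G (pdyy f j i) p + pdx (pdy f i) j p - pdx (pdy f j) i p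
      - 2 * ∑ k, Ncoef G k j p * pdyy f k i p := by
  have hf2 : ContDiffAt ℝ 2 f p := hf.of_le (by norm_num)
  have hpdy : ContDiffAt ℝ 2 (pdy f i) p := contDiffAt_pdy hf (by norm_num) i
  have hsub : pdy (EL G f i) j p = pdy (Sop G (pdy f i)) j p - pdy (pdx f i) j p :=
    pdy_sub (differentiableAt_sop hG hpdy) (differentiableAt_pdx hf2 i) j
  rw [hsub, pdy_sop hG hpdy, pdy_pdx_comm hf2]
  simp only [pdyy]
  ring

/-! ### The metric of a Lagrangian -/

/-- The fibre Hessian `½ ∂²L/∂y^i∂y^j` of a Lagrangian `L`, with no nondegeneracy imposed;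
`metricTensor F` is the case `L = F²`. -/
def lagrangianMetric (L : Pt n → ℝ) (i j : Fin n) (p : Pt n) : ℝ :=
  (1 / 2) * pdyy L i j p

/-- The form `D = δ_S L − 2P d_J L`, which vanishes exactly when the spray `S` is projectively
related to `L` with projective factor `P`. -/
def projectiveDefect (G : Fin n → Pt n → ℝ) (L P : Pt n → ℝ) (i : Fin n) (p : Pt n) : ℝ :=
  EL G L i p - 2 * P p * pdy L i p

variable {L P : Pt n → ℝ}

theorem lagrangianMetric_comm (hL : ContDiffAt ℝ 2 L p) (i j : Fin n) :
    lagrangianMetric L i j p = lagrangianMetric L j i p := by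
  simp only [lagrangianMetric, pdyy, pdy_pdy_comm hL i j]

theorem four_mul_nablaT_lagrangianMetric (hG : ∀ k, DifferentiableAt ℝ (G k) p)
    (hL : ContDiffAt ℝ 3 L p) (i j : Fin n) :
    4 * nablaT G (lagrangianMetric L) i j p = pdy (EL G L i) j p + pdy (EL G L j) i p := by
  have hL2 : ContDiffAt ℝ 2 L p := hL.of_le (by norm_num)
  have hsop_comm : Sop G (pdyy L j i) p = Sop G (pdyy L i j) p :=
    sop_congr G <| (hL2.eventually (by simp)).mono fun q hq => pdy_pdy_comm hq i j
  have hsop : Sop G (lagrangianMetric L i j) p = 1 / 2 * Sop G (pdyy L i j) p :=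
    sop_const_mul G (differentiableAt_pdy (contDiffAt_pdy hL (by norm_num) j) i) _
  have hN : ∑ k, (Ncoef G k i p * lagrangianMetric L k j p
        + Ncoef G k j p * lagrangianMetric L i k p)
      = 1 / 2 * (∑ k, Ncoef G k i p * pdyy L k j p + ∑ k, Ncoef G k j p * pdyy L k i p) := by
    rw [← Finset.sum_add_distrib, Finset.mul_sum]
    refine Finset.sum_congr rfl fun k _ => ?_
    rw [lagrangianMetric_comm hL2 i k]
    simp only [lagrangianMetric]
    ring
  rw [pdy_el hG hL i j, pdy_el hG hL j i, nablaT, hsop, hN, hsop_comm]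
  ring

theorem sum_lagrangianMetric_mul_snd (hU : IsOpen U) (hL : PosHomog U 2 L)
    (hcL : ContDiffOn ℝ 2 L (OmegaSet U)) (hp : p ∈ OmegaSet U) (i : Fin n) :
    ∑ k, lagrangianMetric L k i p * p.2 k = 1 / 2 * pdy L i p := by
  have hpdy : DifferentiableAt ℝ (pdy L i) p :=
    differentiableAt_pdy (hcL.contDiffAt ((isOpen_omegaSet hU).mem_nhds hp)) i
  have heuler : ∑ k, p.2 k * pdyy L k i p = pdy L i p := by
    simpa [pdyy] using
      (posHomog_pdy hL hU (hcL.differentiableOn two_ne_zero) i).sum_snd_mul_pdy hpdy hp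
  rw [← heuler, Finset.mul_sum]
  exact Finset.sum_congr rfl fun k _ => by
    rw [lagrangianMetric]
    ring

theorem differentiableAt_projectiveDefect (hG : ∀ k, DifferentiableAt ℝ (G k) p)
    (hL : ContDiffAt ℝ 3 L p) (hP : DifferentiableAt ℝ P p) (i : Fin n) :
    DifferentiableAt ℝ (projectiveDefect G L P i) p :=
  (differentiableAt_el hG hL i).fun_sub
    ((hP.const_mul 2).fun_mul (differentiableAt_pdy (hL.of_le (by norm_num)) i))

theorem posHomog_projectiveDefect (hG : ∀ i, PosHomog U 2 (G i)) (hU : IsOpen U) {k : ℤ}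
    (hL : PosHomog U k L) (hcL : ContDiffOn ℝ 2 L (OmegaSet U)) (hP : PosHomog U 1 P)
    (i : Fin n) : PosHomog U k (projectiveDefect G L P i) := by
  have hrhs := (hP.const_mul 2).mul (posHomog_pdy hL hU (hcL.differentiableOn two_ne_zero) i)
  rw [add_sub_cancel] at hrhs
  exact (posHomog_el hG hU hL hcL i).sub hrhs

theorem pdy_projectiveDefect (hG : ∀ k, DifferentiableAt ℝ (G k) p) (hL : ContDiffAt ℝ 3 L p)
    (hP : DifferentiableAt ℝ P p) (i j : Fin n) :
    pdy (projectiveDefect G L P i) j p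
      = pdy (EL G L i) j p - 2 * pdy P j p * pdy L i p
        - 4 * P p * lagrangianMetric L j i p := by
  have hpdy : DifferentiableAt ℝ (pdy L i) p := differentiableAt_pdy (hL.of_le (by norm_num)) i
  have hsub : pdy (projectiveDefect G L P i) j p
      = pdy (EL G L i) j p - pdy (fun q => 2 * P q * pdy L i q) j p :=
    pdy_sub (differentiableAt_el hG hL i) ((hP.const_mul 2).fun_mul hpdy) j
  rw [hsub, pdy_mul (hP.const_mul 2) hpdy, pdy_const_mul hP, lagrangianMetric, pdyy]
  ring

theorem pdy_projectiveDefect_add_swap (hU : IsOpen U) (hG : ∀ k, DifferentiableAt ℝ (G k) p)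
    (hL : PosHomog U 2 L) (hcL : ContDiffOn ℝ 3 L (OmegaSet U)) (hP : DifferentiableAt ℝ P p)
    (hp : p ∈ OmegaSet U) (i j : Fin n) :
    pdy (projectiveDefect G L P i) j p + pdy (projectiveDefect G L P j) i p
      = 4 * (nablaT G (lagrangianMetric L) i j p
        - (2 * P p * lagrangianMetric L i j p
          + pdy P i p * ∑ k, lagrangianMetric L k j p * p.2 k
          + pdy P j p * ∑ k, lagrangianMetric L i k p * p.2 k)) := by
  have hL3 : ContDiffAt ℝ 3 L p := hcL.contDiffAt ((isOpen_omegaSet hU).mem_nhds hp)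
  have hcL2 : ContDiffOn ℝ 2 L (OmegaSet U) := hcL.of_le (by norm_num)
  have hcomm := lagrangianMetric_comm (hL3.of_le (by norm_num : (2 : WithTop ℕ∞) ≤ 3)) i
  simp only [hcomm, sum_lagrangianMetric_mul_snd hU hL hcL2 hp]
  rw [pdy_projectiveDefect hG hL3 hP, pdy_projectiveDefect hG hL3 hP, hcomm]
  linear_combination -four_mul_nablaT_lagrangianMetric hG hL3 i j

theorem statement5_general (hU : IsOpen U) (hdG : ∀ i, DifferentiableOn ℝ (G i) (OmegaSet U))
    (hG : ∀ i, PosHomog U 2 (G i)) (hcL : ContDiffOn ℝ 3 L (OmegaSet U)) (hL : PosHomog U 2 L)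
    (hdP : DifferentiableOn ℝ P (OmegaSet U)) (hP : PosHomog U 1 P) :
    (∀ i, ∀ p ∈ OmegaSet U, EL G L i p = 2 * P p * pdy L i p) ↔
      ∀ i j, ∀ p ∈ OmegaSet U,
        nablaT G (lagrangianMetric L) i j p
          = 2 * P p * lagrangianMetric L i j p
            + pdy P i p * ∑ k, lagrangianMetric L k j p * p.2 k
            + pdy P j p * ∑ k, lagrangianMetric L i k p * p.2 k := by
  have hnhds : ∀ p ∈ OmegaSet U, OmegaSet U ∈ 𝓝 p := fun p hp =>
    (isOpen_omegaSet hU).mem_nhds hp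
  have hG_at : ∀ p ∈ OmegaSet U, ∀ i, DifferentiableAt ℝ (G i) p := fun p hp i =>
    (hdG i).differentiableAt (hnhds p hp)
  have hP_at : ∀ p ∈ OmegaSet U, DifferentiableAt ℝ P p := fun p hp =>
    hdP.differentiableAt (hnhds p hp)
  constructor
  · intro h i j p hp
    have hvanish : ∀ i, projectiveDefect G L P i =ᶠ[𝓝 p] fun _ => 0 := fun i =>
      eventually_of_mem (hnhds p hp) fun q hq => sub_eq_zero.mpr (h i q hq)
    have hswap := pdy_projectiveDefect_add_swap hU (hG_at p hp) hL hcL (hP_at p hp) hp i j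
    rw [pdy_congr (hvanish i), pdy_congr (hvanish j), pdy_const, pdy_const] at hswap
    linarith
  · intro h i p hp
    refine sub_eq_zero.mp (eq_zero_of_pdy_add_pdy_swap_eq_zero hU two_ne_zero (by norm_num)
      (D := projectiveDefect G L P) (fun i q hq => ?_)
      (posHomog_projectiveDefect hG hU hL (hcL.of_le (by norm_num)) hP) (fun i j q hq => ?_) i hp)
    · exact (differentiableAt_projectiveDefect (hG_at q hq) (hcL.contDiffAt (hnhds q hq))
        (hP_at q hq) i).differentiableWithinAt
    · rw [pdy_projectiveDefect_add_swap hU (hG_at q hq) hL hcL (hP_at q hq) hq, h i j q hq,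
        sub_self, mul_zero]

end ProjectiveRelation

/-- Theorem 2 i): `S` is projectively related to the Finsler structure `F̃`
(i.e. `δ_S F̃² = 2P d_J F̃²` for some 1-homogeneous `P`) iff the metric tensor `g̃_{ij}`
satisfies the Levi-Civita equations for some 1-homogeneous `P`. -/
theorem statement5 {n : ℕ} (hn : 1 ≤ n) (U : Set (Fin n → ℝ)) (hU : IsOpen U)
    (G : Fin n → Pt n → ℝ) (hG : IsSpray U G)
    (Ft : Pt n → ℝ) (hFt : IsFinsler U Ft) :
    (∃ P : Pt n → ℝ, ContDiffOn ℝ (⊤ : ℕ∞) P (OmegaSet U) ∧ PosHomog U 1 P ∧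
        ∀ i, ∀ p ∈ OmegaSet U,
          EL G (fun q => Ft q ^ 2) i p = 2 * P p * pdy (fun q => Ft q ^ 2) i p) ↔
      (∃ P : Pt n → ℝ, ContDiffOn ℝ (⊤ : ℕ∞) P (OmegaSet U) ∧ PosHomog U 1 P ∧
        ∀ i j, ∀ p ∈ OmegaSet U,
          nablaT G (metricTensor Ft) i j p
            = 2 * P p * metricTensor Ft i j p
              + pdy P i p * ∑ k, metricTensor Ft k j p * p.2 k
              + pdy P j p * ∑ k, metricTensor Ft i k p * p.2 k) := by
  obtain ⟨hF, -, hF1, -⟩ := hFt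
  exact exists_congr fun P => and_congr_right fun hP => and_congr_right fun hP1 =>
    statement5_general hU (fun i => (hG i).1.differentiableOn (by simp)) (fun i => (hG i).2)
      ((hF.pow 2).of_le (WithTop.coe_le_coe.mpr le_top)) (hF1.pow 2)
      (hP.differentiableOn (by simp)) hP1
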